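/- arXiv:2603.25307 — 6 statements merged into one kernel-verified Lean document; each statement's English description precedes it below -/
import Mathlib

section
/- For a k-symbol alphabet with k ≥ 2 and block size β = k+1, the Zeckendorf support of the block-partition code gc(s) of any string s of length m is exactly the set of selected indices: Z(gc(s)) = {2 + i·β + c_i : 0 ≤ i < m}. Equivalently, the list of selected indices (each ≥ 2, pairwise differing by at least 2) is the Zeckendorf representation of gc(s). -/
/-!
The indices `2 + i * (k + 1) + c_i` lie in successive blocks of length `k + 1`, of which only the
first `k` positions can be selected; since the last position of each block stays empty, indices from
distinct blocks differ by at least `2` (`selected_gap`). Hence the selected indices are distinct and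
form a Zeckendorf support of `gc s`. Uniqueness is Zeckendorf's theorem: a Zeckendorf support listed
in decreasing order is a Zeckendorf representation in Mathlib's sense, so it equals `Nat.zeckendorf`
of its sum (`IsZeckSupport.eq_toFinset_zeckendorf`).
-/

/-- The block-partition Fibonacci code of a string `s` over a `k`-symbol alphabet:
`gc s = Σ_{i<m} F_{2 + i·(k+1) + c_i}`, with `gc [] = 0`. -/
def gc {k : ℕ} (s : List (Fin k)) : ℕ :=
  ∑ i : Fin s.length, Nat.fib (2 + (i : ℕ) * (k + 1) + (s.get i : ℕ))

/-- `S` is the Zeckendorf support of `n`: all indices `≥ 2`, pairwise differing by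
at least `2`, and the corresponding Fibonacci numbers sum to `n` (with `Z(0) = ∅`). -/
def IsZeckSupport (n : ℕ) (S : Finset ℕ) : Prop :=
  (∀ a ∈ S, 2 ≤ a) ∧ (∀ a ∈ S, ∀ b ∈ S, a < b → a + 2 ≤ b) ∧
    ∑ a ∈ S, Nat.fib a = n

lemma selected_gap {k : ℕ} (s : List (Fin k)) {i j : Fin s.length} (hij : i < j) :
    2 + (i : ℕ) * (k + 1) + (s.get i : ℕ) + 2 ≤ 2 + (j : ℕ) * (k + 1) + (s.get j : ℕ) := by
  have h1 : ((i : ℕ) + 1) * (k + 1) ≤ (j : ℕ) * (k + 1) := Nat.mul_le_mul_right _ hij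
  have h2 := (s.get i).isLt
  rw [Nat.succ_mul] at h1
  omega

/-- A Zeckendorf support of `n` is determined by `n`. -/
lemma IsZeckSupport.eq_toFinset_zeckendorf {n : ℕ} {S : Finset ℕ} (h : IsZeckSupport n S) :
    S = (Nat.zeckendorf n).toFinset := by
  obtain ⟨h2, hgap, hsum⟩ := h
  have hrep : (S.sort (· ≥ ·)).IsZeckendorfRep := by
    unfold List.IsZeckendorfRep
    apply List.Pairwise.isChain
    rw [List.pairwise_append]
    refine ⟨?_, by simp, ?_⟩
    · refine List.Pairwise.imp_of_mem ?_
        ((Finset.pairwise_sort S (· ≥ ·)).and (Finset.sort_nodup S (· ≥ ·)))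
      intro a b ha hb hab
      rw [Finset.mem_sort] at ha hb
      exact hgap b hb a ha (lt_of_le_of_ne hab.1 (Ne.symm hab.2))
    · intro a ha b hb
      rw [Finset.mem_sort] at ha
      have := h2 a ha
      simp_all
  have hlist : ((S.sort (· ≥ ·)).map Nat.fib).sum = n := by
    rw [← hsum, ← List.sum_toFinset _ (Finset.sort_nodup S (· ≥ ·)), Finset.sort_toFinset]
  rw [← hlist, Nat.zeckendorf_sum_fib hrep, Finset.sort_toFinset]

/-- the Zeckendorf support of `gc s` is exactly the set of selected
indices `{2 + i·β + c_i : 0 ≤ i < m}` (and it is unique, by Zeckendorf's theorem). -/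
theorem stmt1 (k : ℕ) (hk : 2 ≤ k) (s : List (Fin k)) :
    IsZeckSupport (gc s)
      (Finset.image (fun i : Fin s.length => 2 + (i : ℕ) * (k + 1) + (s.get i : ℕ))
        Finset.univ) ∧
    ∀ S : Finset ℕ, IsZeckSupport (gc s) S →
      S = Finset.image (fun i : Fin s.length => 2 + (i : ℕ) * (k + 1) + (s.get i : ℕ))
        Finset.univ := by
  have hinj : Function.Injective
      (fun i : Fin s.length => 2 + (i : ℕ) * (k + 1) + (s.get i : ℕ)) := by
    refine StrictMono.injective fun i j hij => ?_
    have := selected_gap s hij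
    omega
  have hsupp : IsZeckSupport (gc s)
      (Finset.image (fun i : Fin s.length => 2 + (i : ℕ) * (k + 1) + (s.get i : ℕ))
        Finset.univ) := by
    refine ⟨?_, ?_, ?_⟩
    · intro a ha
      obtain ⟨i, -, rfl⟩ := Finset.mem_image.1 ha
      omega
    · intro a ha b hb hab
      obtain ⟨i, -, rfl⟩ := Finset.mem_image.1 ha
      obtain ⟨j, -, rfl⟩ := Finset.mem_image.1 hb
      rcases lt_trichotomy i j with hij | rfl | hij
      · exact selected_gap s hij
      · exact absurd hab (lt_irrefl _)
      · have := selected_gap s hij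
        omega
    · rw [Finset.sum_image fun i _ j _ h => hinj h]
      rfl
  exact ⟨hsupp, fun S hS =>
    hS.eq_toFinset_zeckendorf.trans hsupp.eq_toFinset_zeckendorf.symm⟩
end

section
/- For a k-symbol alphabet with k ≥ 2 and block size β = k+1, the block-partition encoding is injective on all finite strings: if s and t are strings (possibly of different lengths, possibly empty) with s ≠ t, then gc(s) ≠ gc(t). -/
lemma gc_concat {k : ℕ} (s : List (Fin k)) (c : Fin k) :
    gc (s ++ [c]) = gc s + Nat.fib (2 + s.length * (k + 1) + c) := by
  -- Summing over `Finset.range` with `getD` avoids dependent indices.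
  have key : ∀ u : List (Fin k), gc u = ∑ i ∈ Finset.range u.length,
      Nat.fib (2 + i * (k + 1) + (u.getD i c : ℕ)) := by
    intro u
    rw [Finset.sum_range]
    simp [gc]
  rw [key, key, List.length_append, List.length_singleton, Finset.sum_range_succ]
  congr 1
  · refine Finset.sum_congr rfl fun i hi => ?_
    rw [List.getD_append _ _ _ _ (Finset.mem_range.1 hi)]
  · simp

/-- The largest index available to a string of length `m` is `m * (k + 1)`, and a sum of
Fibonacci numbers with non-consecutive indices is below the Fibonacci number following its
largest term. -/
lemma gc_lt {k : ℕ} (s : List (Fin k)) : gc s < Nat.fib (1 + s.length * (k + 1)) := by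
  induction s using List.reverseRecOn with
  | nil => simp [gc]
  | append_singleton s c ih =>
    have h1 : Nat.fib (1 + s.length * (k + 1)) ≤ Nat.fib (1 + s.length * (k + 1) + c) :=
      Nat.fib_mono (by omega)
    have h2 : Nat.fib (1 + s.length * (k + 1) + c + 2) ≤
        Nat.fib (1 + (s ++ [c]).length * (k + 1)) := by
      apply Nat.fib_mono
      have := c.isLt
      simp only [List.length_append, List.length_singleton, add_mul]
      omega
    rw [Nat.fib_add_two] at h2
    rw [gc_concat, show 2 + s.length * (k + 1) + (c : ℕ) = 1 + s.length * (k + 1) + c + 1 by ring]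
    omega

lemma fib_le_gc_concat {k : ℕ} (s : List (Fin k)) (c : Fin k) :
    Nat.fib (2 + s.length * (k + 1) + c) ≤ gc (s ++ [c]) := by
  rw [gc_concat]
  exact Nat.le_add_left _ _

lemma gc_concat_lt {k : ℕ} (s : List (Fin k)) (c : Fin k) :
    gc (s ++ [c]) < Nat.fib (2 + s.length * (k + 1) + c + 1) := by
  have h1 : Nat.fib (1 + s.length * (k + 1)) ≤ Nat.fib (1 + s.length * (k + 1) + c) :=
    Nat.fib_mono (by omega)
  have h2 := gc_lt s
  rw [gc_concat, show 2 + s.length * (k + 1) + (c : ℕ) = 1 + s.length * (k + 1) + c + 1 by ring,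
    Nat.fib_add_two]
  omega

lemma gc_concat_pos {k : ℕ} (s : List (Fin k)) (c : Fin k) : 0 < gc (s ++ [c]) :=
  (Nat.fib_pos.2 (by omega)).trans_le (fib_le_gc_concat s c)

lemma gc_injective (k : ℕ) : Function.Injective (gc (k := k)) := by
  intro s
  induction s using List.reverseRecOn with
  | nil =>
    intro t h
    induction t using List.reverseRecOn with
    | nil => rfl
    | append_singleton t d _ =>
      have := gc_concat_pos t d
      rw [← h] at this
      simp [gc] at this
  | append_singleton s c ih =>
    intro t h
    induction t using List.reverseRecOn with
    | nil =>
      have := gc_concat_pos s c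
      rw [h] at this
      simp [gc] at this
    | append_singleton t d _ =>
      have h1 := Nat.fib_mono.reflect_lt
        ((fib_le_gc_concat s c).trans_lt (h ▸ gc_concat_lt t d))
      have h2 := Nat.fib_mono.reflect_lt
        ((fib_le_gc_concat t d).trans_lt (h ▸ gc_concat_lt s c))
      have h3 : (c : ℕ) + (k + 1) * s.length = d + (k + 1) * t.length := by
        rw [mul_comm, mul_comm (k + 1)]
        omega
      have hc := c.isLt
      have hd := d.isLt
      have hcd : (c : ℕ) = d := by
        have := congrArg (· % (k + 1)) h3
        simpa [Nat.add_mul_mod_self_left, Nat.mod_eq_of_lt (hc.trans k.lt_succ_self),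
          Nat.mod_eq_of_lt (hd.trans k.lt_succ_self)] using this
      obtain rfl := Fin.ext hcd
      have hlen : s.length = t.length :=
        Nat.eq_of_mul_eq_mul_left k.succ_pos (Nat.add_left_cancel h3)
      rw [gc_concat, gc_concat, hlen] at h
      rw [ih (Nat.add_right_cancel h)]

/-- the block-partition encoding is injective on all finite strings. -/
theorem stmt2 (k : ℕ) (hk : 2 ≤ k) (s t : List (Fin k)) (hst : s ≠ t) :
    gc s ≠ gc t := by
  exact fun h => hst (gc_injective k h)
end

section
/- For a k-symbol alphabet with k ≥ 2 and block size β = k+1: gc(s) = 0 if and only if s is the empty string; moreover, if s and t are strings with |s| < |t|, then gc(s) < gc(t). -/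
theorem sum_fib_lt {k : ℕ} (m : ℕ) (c : Fin m → Fin k) :
    ∑ i : Fin m, Nat.fib (2 + (i : ℕ) * (k + 1) + (c i : ℕ)) < Nat.fib (2 + m * (k + 1)) := by
  induction m with
  | zero => simp
  | succ m ih =>
    rw [Fin.sum_univ_castSucc]
    have hlow := ih (fun i => c i.castSucc)
    have hc := (c (Fin.last m)).isLt
    simp only [Fin.val_castSucc, Fin.val_last]
    obtain ⟨j, rfl⟩ : ∃ j, k = j + 1 := ⟨k - 1, by omega⟩
    have htop : Nat.fib (2 + m * (j + 1 + 1) + (c (Fin.last m) : ℕ))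
        ≤ Nat.fib (2 + m * (j + 1 + 1) + j) := Nat.fib_mono (by omega)
    have hstep : Nat.fib (2 + m * (j + 1 + 1)) ≤ Nat.fib (2 + m * (j + 1 + 1) + j + 1) :=
      Nat.fib_mono (by omega)
    have hrec := Nat.fib_add_two (n := 2 + m * (j + 1 + 1) + j)
    have hidx : 2 + (m + 1) * (j + 1 + 1) = 2 + m * (j + 1 + 1) + j + 2 := by ring
    rw [hidx]
    omega

theorem gc_lt_of_length_lt {k : ℕ} (s t : List (Fin k)) (h : s.length < t.length) :
    gc s < gc t := by
  -- Only the term of `t` at position `|s|` is needed.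
  calc gc s < Nat.fib (2 + s.length * (k + 1)) := sum_fib_lt s.length s.get
    _ ≤ Nat.fib (2 + s.length * (k + 1) + (t.get ⟨s.length, h⟩ : ℕ)) :=
        Nat.fib_mono (Nat.le_add_right _ _)
    _ ≤ gc t := Finset.single_le_sum
        (f := fun i : Fin t.length => Nat.fib (2 + (i : ℕ) * (k + 1) + (t.get i : ℕ)))
        (fun _ _ => Nat.zero_le _) (Finset.mem_univ (⟨s.length, h⟩ : Fin t.length))

/-- `gc s = 0` iff `s` is empty; moreover strictly shorter strings have
strictly smaller codes. -/
theorem stmt3 (k : ℕ) (hk : 2 ≤ k) :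
    (∀ s : List (Fin k), gc s = 0 ↔ s = []) ∧
    (∀ s t : List (Fin k), s.length < t.length → gc s < gc t) := by
  refine ⟨fun s => ⟨fun h => ?_, fun h => by subst h; rfl⟩, gc_lt_of_length_lt⟩
  by_contra hs
  have := gc_lt_of_length_lt [] s (List.length_pos_iff.mpr hs)
  omega
end

section
/- For a k-symbol alphabet with k ≥ 2 and block size β = k+1, the length of a string is recoverable from its code: for every string s, the cardinality of the Zeckendorf support of gc(s) equals the length of s, i.e., |Z(gc(s))| = |s| (with Z(0) = ∅ giving length 0 for the empty string). -/
/-- Uniqueness: a Zeckendorf support of `n`, listed in decreasing order, is Mathlib's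
`Nat.zeckendorf n`. -/
lemma IsZeckSupport.sort_eq {n : ℕ} {S : Finset ℕ} (h : IsZeckSupport n S) :
    S.sort (· ≥ ·) = n.zeckendorf := by
  obtain ⟨h2, hgap, hsum⟩ := h
  have hrep : (S.sort (· ≥ ·)).IsZeckendorfRep := by
    refine List.Pairwise.isChain (List.pairwise_append.2 ⟨?_, by simp, ?_⟩)
    · refine (S.sortedGT_sort.pairwise).imp_of_mem ?_
      intro a b ha hb hab
      exact hgap b ((Finset.mem_sort _).1 hb) a ((Finset.mem_sort _).1 ha) hab
    · intro a ha b hb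
      have := h2 a ((Finset.mem_sort _).1 ha)
      simp only [List.mem_singleton] at hb
      omega
  have hs : ((S.sort (· ≥ ·)).map Nat.fib).sum = n := by
    rw [← hsum, ← List.sum_toFinset _ (S.sort_nodup _), Finset.sort_toFinset]
  rw [← hs, Nat.zeckendorf_sum_fib hrep]

/-- Indices of the code belonging to distinct blocks are non-adjacent. -/
lemma block_gap {k i j c d : ℕ} (hij : i < j) (hc : c < k) :
    2 + i * (k + 1) + c + 2 ≤ 2 + j * (k + 1) + d := by
  have : (i + 1) * (k + 1) ≤ j * (k + 1) := Nat.mul_le_mul_right _ hij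
  rw [Nat.add_mul] at this
  omega

/-- the length of the string is recoverable from its code:
`|Z(gc s)| = |s|`. -/
theorem stmt4 (k : ℕ) (hk : 2 ≤ k) (s : List (Fin k))
    (S : Finset ℕ) (hS : IsZeckSupport (gc s) S) :
    S.card = s.length := by
  let f : Fin s.length → ℕ := fun i => 2 + (i : ℕ) * (k + 1) + (s.get i : ℕ)
  have hgap : ∀ i j, i < j → f i + 2 ≤ f j := fun i j hij => block_gap hij (s.get i).isLt
  have hmono : StrictMono f := fun i j hij => by have := hgap i j hij; omega
  have hT : IsZeckSupport (gc s) (Finset.univ.image f) := by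
    refine ⟨?_, ?_, ?_⟩
    · simp only [Finset.mem_image, Finset.mem_univ, true_and, forall_exists_index,
        forall_apply_eq_imp_iff]
      intro i
      simp only [f]
      omega
    · simp only [Finset.mem_image, Finset.mem_univ, true_and, forall_exists_index,
        forall_apply_eq_imp_iff]
      intro i j hij
      exact hgap i j (hmono.lt_iff_lt.1 hij)
    · rw [Finset.sum_image hmono.injective.injOn]
      rfl
  rw [← Finset.length_sort (s := S) (· ≥ ·), hS.sort_eq, ← hT.sort_eq, Finset.length_sort,
    Finset.card_image_of_injective _ hmono.injective, Finset.card_univ, Fintype.card_fin]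
end

section
/- For a k-symbol alphabet with k ≥ 2 and block size β = k+1, and any nonempty string s of length m, the length is also given by the largest Zeckendorf index: m = ⌊(e_max − 2)/β⌋ + 1, where e_max = max Z(gc(s)). -/
/-- A sum of Fibonacci numbers with pairwise non-consecutive indices in `[2, n)` is less than
`F_n`; positivity of `n` is needed because the empty sum is not less than `F_0 = 0`. -/
lemma sum_fib_lt_of_isolated (n : ℕ) (hn : 1 ≤ n) (S : Finset ℕ) (h2 : ∀ a ∈ S, 2 ≤ a)
    (hgap : ∀ a ∈ S, ∀ b ∈ S, a < b → a + 2 ≤ b) (hlt : ∀ a ∈ S, a < n) :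
    ∑ a ∈ S, Nat.fib a < Nat.fib n := by
  induction n using Nat.strong_induction_on generalizing S with
  | _ n ih =>
    obtain rfl | ⟨p, rfl⟩ : n = 1 ∨ ∃ p, n = p + 2 := by
      rcases n with _ | _ | p
      · omega
      · exact Or.inl rfl
      · exact Or.inr ⟨p, rfl⟩
    · have hS : S = ∅ := by
        refine Finset.eq_empty_of_forall_notMem fun a ha => ?_
        have := h2 a ha
        have := hlt a ha
        omega
      simp [hS]
    by_cases hp : p + 1 ∈ S
    · have hrest := ih p (by omega) (by have := h2 _ hp; omega) (S.erase (p + 1))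
        (fun a ha => h2 a (Finset.mem_of_mem_erase ha))
        (fun a ha b hb => hgap a (Finset.mem_of_mem_erase ha) b (Finset.mem_of_mem_erase hb))
        (fun a ha => by
          have hne := Finset.ne_of_mem_erase ha
          have haS := Finset.mem_of_mem_erase ha
          have := hlt a haS
          have := hgap a haS _ hp (by omega)
          omega)
      rw [← Finset.add_sum_erase S _ hp, Nat.fib_add_two]
      omega
    · have h := ih (p + 1) (by omega) (by omega) S h2 hgap (fun a ha => by
        have hne : a ≠ p + 1 := fun h => hp (h ▸ ha)
        have := hlt a ha
        omega)
      exact h.trans_le (Nat.fib_mono (by omega))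

lemma sum_block_lt (k m : ℕ) (c : Fin m → ℕ) (hc : ∀ i, c i < k) :
    ∑ i : Fin m, Nat.fib (2 + (i : ℕ) * (k + 1) + c i) < Nat.fib (1 + m * (k + 1)) := by
  induction m with
  | zero => simp
  | succ m ih =>
    rw [Fin.sum_univ_castSucc]
    have h := ih (fun i => c i.castSucc) (fun i => hc _)
    have hlast := hc (Fin.last m)
    simp only [Fin.val_castSucc, Fin.val_last]
    set d := c (Fin.last m)
    -- Raising the bound for the earlier blocks to `F_{1+mβ+d}` lets the recurrence absorb it.
    have h1 : Nat.fib (1 + m * (k + 1)) ≤ Nat.fib (1 + m * (k + 1) + d) :=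
      Nat.fib_mono (by omega)
    have h2 : Nat.fib (1 + m * (k + 1) + d + 2) ≤ Nat.fib (1 + (m + 1) * (k + 1)) := by
      apply Nat.fib_mono
      rw [Nat.add_mul m 1]
      omega
    rw [Nat.fib_add_two] at h2
    have h3 : 2 + m * (k + 1) + d = 1 + m * (k + 1) + d + 1 := by omega
    rw [h3]
    omega

/-- for a nonempty string, `m = ⌊(e_max − 2)/β⌋ + 1` where
`e_max = max Z(gc s)`. -/
theorem stmt5 (k : ℕ) (hk : 2 ≤ k) (s : List (Fin k)) (hs : s ≠ [])
    (S : Finset ℕ) (hS : IsZeckSupport (gc s) S) (hne : S.Nonempty) :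
    s.length = (S.max' hne - 2) / (k + 1) + 1 := by
  obtain ⟨h2, hgap, hsum⟩ := hS
  have hE := S.max'_mem hne
  have hle := S.le_max'
  set E := S.max' hne
  have hElow : Nat.fib E ≤ gc s :=
    hsum ▸ Finset.single_le_sum (f := Nat.fib) (fun _ _ => Nat.zero_le _) hE
  have hEup : gc s < Nat.fib (E + 1) :=
    hsum ▸ sum_fib_lt_of_isolated (E + 1) (by omega) S h2 hgap
      (fun a ha => Nat.lt_succ_of_le (hle a ha))
  have hup : gc s < Nat.fib (1 + s.length * (k + 1)) :=
    sum_block_lt k s.length (fun i => (s.get i : ℕ)) (fun i => (s.get i).isLt)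
  have hpos : 0 < s.length := List.length_pos_of_ne_nil hs
  obtain ⟨m, hm⟩ : ∃ m, s.length = m + 1 := ⟨s.length - 1, by omega⟩
  have hlow : Nat.fib (2 + m * (k + 1)) ≤ gc s := by
    have h := Finset.single_le_sum
      (f := fun i : Fin s.length => Nat.fib (2 + (i : ℕ) * (k + 1) + (s.get i : ℕ)))
      (fun _ _ => Nat.zero_le _) (Finset.mem_univ (⟨m, by omega⟩ : Fin s.length))
    exact (Nat.fib_mono (Nat.le_add_right _ _)).trans h
  have hE1 : E < 1 + s.length * (k + 1) := Nat.fib_mono.reflect_lt (hElow.trans_lt hup)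
  have hE2 : 2 + m * (k + 1) < E + 1 := Nat.fib_mono.reflect_lt (hlow.trans_lt hEup)
  rw [hm] at hE1 ⊢
  have hdiv : (E - 2) / (k + 1) = m := by
    apply Nat.div_eq_of_lt_le
    · omega
    · omega
  rw [hdiv]
end

section
/- Characterization of valid codes: for a k-symbol alphabet with k ≥ 2 and block size β = k+1, a natural number n lies in the image of the block-partition encoding gc if and only if n = 0, or there exist m ≥ 1 and c_0, …, c_{m−1} ∈ {0,…,k−1} such that the Zeckendorf support of n is exactly {2 + i·β + c_i : 0 ≤ i < m} (one index from each block B_i = {2 + i·β, …, 2 + i·β + k − 1} for i = 0, …, m−1, and no index in any gap position 2 + i·β + k). -/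
/-- The gap position after each block keeps indices from different blocks non-consecutive. -/
theorem blockIndex_gap {k m : ℕ} (c : Fin m → Fin k) {i j : Fin m} (hij : i < j) :
    2 + (i : ℕ) * (k + 1) + (c i : ℕ) + 2 ≤ 2 + (j : ℕ) * (k + 1) + (c j : ℕ) := by
  have h1 : ((i : ℕ) + 1) * (k + 1) ≤ (j : ℕ) * (k + 1) := Nat.mul_le_mul_right _ hij
  have h2 := (c i).isLt
  rw [Nat.succ_mul] at h1
  omega

theorem blockIndex_injective {k m : ℕ} (c : Fin m → Fin k) :
    Function.Injective (fun i : Fin m => 2 + (i : ℕ) * (k + 1) + (c i : ℕ)) := by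
  intro i j h
  dsimp only at h
  rcases lt_trichotomy i j with hij | hij | hij
  · have := blockIndex_gap c hij
    omega
  · exact hij
  · have := blockIndex_gap c hij
    omega

theorem isZeckSupport_blockIndex {k m : ℕ} (c : Fin m → Fin k) :
    IsZeckSupport (∑ i : Fin m, Nat.fib (2 + (i : ℕ) * (k + 1) + (c i : ℕ)))
      (Finset.image (fun i : Fin m => 2 + (i : ℕ) * (k + 1) + (c i : ℕ)) Finset.univ) := by
  refine ⟨?_, ?_, Finset.sum_image (blockIndex_injective c).injOn⟩
  · intro a ha
    obtain ⟨i, -, rfl⟩ := Finset.mem_image.1 ha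
    omega
  · intro a ha b hb hab
    obtain ⟨i, -, rfl⟩ := Finset.mem_image.1 ha
    obtain ⟨j, -, rfl⟩ := Finset.mem_image.1 hb
    rcases lt_trichotomy i j with hij | hij | hij
    · exact blockIndex_gap c hij
    · subst hij
      omega
    · have := blockIndex_gap c hij
      omega

theorem gc_ofFn {k m : ℕ} (c : Fin m → Fin k) :
    gc (List.ofFn c) = ∑ i : Fin m, Nat.fib (2 + (i : ℕ) * (k + 1) + (c i : ℕ)) := by
  unfold gc
  refine Fintype.sum_equiv (finCongr List.length_ofFn) _ _ fun i => ?_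
  simp [Fin.cast]

/-- characterization of valid codes: `n` lies in the image of `gc`
iff `n = 0`, or there are `m ≥ 1` and symbol codes `c_0, …, c_{m−1} ∈ {0,…,k−1}`
such that the Zeckendorf support of `n` is exactly `{2 + i·β + c_i : 0 ≤ i < m}`. -/
theorem stmt14 (k : ℕ) (hk : 2 ≤ k) (n : ℕ) :
    (∃ s : List (Fin k), gc s = n) ↔
      (n = 0 ∨ ∃ m : ℕ, 1 ≤ m ∧ ∃ c : Fin m → Fin k,
        IsZeckSupport n
          (Finset.image (fun i : Fin m => 2 + (i : ℕ) * (k + 1) + (c i : ℕ))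
            Finset.univ)) := by
  constructor
  · rintro ⟨s, rfl⟩
    rcases Nat.eq_zero_or_pos s.length with h | h
    · left
      rw [List.length_eq_zero_iff.1 h]
      rfl
    · exact Or.inr ⟨s.length, h, s.get, isZeckSupport_blockIndex s.get⟩
  · rintro (rfl | ⟨m, -, c, -, -, hsum⟩)
    · exact ⟨[], rfl⟩
    · refine ⟨List.ofFn c, ?_⟩
      rw [gc_ofFn, ← hsum]
      exact (Finset.sum_image (blockIndex_injective c).injOn).symm
end
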